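/- arXiv:1311.4143 — 2 statements merged into one kernel-verified Lean document; each statement's English description precedes it below -/
import Mathlib

section
/- Let H̃ be a numerical semigroup containing an odd number, and let n be the smallest odd element of H̃. Then g(H̃) ≤ 2·g(d₂(H̃)) + (n−1)/2; equivalently, there exists a non-negative integer r with g(H̃) = 2·g(d₂(H̃)) + (n−1)/2 − r. -/
/-!
The gaps of `H` are covered by three sets. An even gap is `2 * k` with `k` a gap of `d2 H`.
An odd gap `x > n` is `n + 2 * k` with `k` a gap of `d2 H`, since `n ∈ H` and `2 * k ∈ H` would
give `x ∈ H`. An odd gap `x < n` is one of the `(n - 1) / 2` odd numbers below `n`. Counting the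
three sets gives the bound.
-/

/-- The genus of a submonoid of ℕ: the cardinality of its complement in ℕ. -/
noncomputable def genus (H : AddSubmonoid ℕ) : ℕ :=
  ((H : Set ℕ)ᶜ).ncard

/-- `d₂ H = {k : ℕ | 2 * k ∈ H}`, i.e. the set of halves of the even elements of `H`,
equivalently the preimage of `H` under multiplication by 2; it is an additive
submonoid of ℕ by construction. -/
def d2 (H : AddSubmonoid ℕ) : AddSubmonoid ℕ where
  carrier := {k : ℕ | 2 * k ∈ H}
  zero_mem' := by simpa using H.zero_mem
  add_mem' := by
    intro a b ha hb
    simpa [mul_add] using H.add_mem ha hb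

/-- Doubling of a submonoid of ℕ: `{2 * h : h ∈ H}`. -/
def twice (H : AddSubmonoid ℕ) : AddSubmonoid ℕ :=
  AddSubmonoid.map (AddMonoidHom.mulLeft 2) H

/-- The sum of two submonoids of ℕ: `{a + b : a ∈ A, b ∈ B}`. -/
def sumSubmonoid (A B : AddSubmonoid ℕ) : AddSubmonoid ℕ where
  carrier := {x : ℕ | ∃ a ∈ A, ∃ b ∈ B, x = a + b}
  zero_mem' := ⟨0, A.zero_mem, 0, B.zero_mem, by simp⟩
  add_mem' := by
    rintro x y ⟨a, ha, b, hb, rfl⟩ ⟨c, hc, d, hd, rfl⟩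
    exact ⟨a + c, A.add_mem ha hc, b + d, B.add_mem hb hd, by ring⟩

/-- Let `H̃` be a numerical semigroup containing an odd number and let `n` be its
smallest odd element. Then `g(H̃) ≤ 2 g(d₂(H̃)) + (n-1)/2`; equivalently there is a
non-negative integer `r` with `g(H̃) = 2 g(d₂(H̃)) + (n-1)/2 - r`. -/
theorem genus_le_of_smallest_odd (H : AddSubmonoid ℕ) (hH : ((H : Set ℕ)ᶜ).Finite)
    (n : ℕ) (hn : IsLeast {m : ℕ | m ∈ H ∧ Odd m} n) :
    genus H ≤ 2 * genus (d2 H) + (n - 1) / 2 ∧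
      ∃ r : ℕ, genus H + r = 2 * genus (d2 H) + (n - 1) / 2 := by
  have hle : genus H ≤ 2 * genus (d2 H) + (n - 1) / 2 := by
    obtain ⟨⟨hnH, m, hm⟩, -⟩ := hn
    have hfin : ((d2 H : Set ℕ)ᶜ).Finite :=
      hH.preimage (f := fun k => 2 * k) (fun a _ b _ h => by simpa using h)
    have hfin₃ : (Set.Iio ((n - 1) / 2)).Finite := Set.finite_Iio _
    have hcover : (H : Set ℕ)ᶜ ⊆ ((fun k => 2 * k) '' (d2 H : Set ℕ)ᶜ ∪
        (fun k => n + 2 * k) '' (d2 H : Set ℕ)ᶜ) ∪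
        (fun i => 2 * i + 1) '' Set.Iio ((n - 1) / 2) := by
      intro x hx
      rcases Nat.even_or_odd' x with ⟨k, rfl | rfl⟩
      · exact Or.inl (Or.inl ⟨k, hx, rfl⟩)
      · rcases lt_or_ge k m with hk | hk
        · exact Or.inr ⟨k, Set.mem_Iio.2 (by omega), rfl⟩
        · have hxk : n + 2 * (k - m) = 2 * k + 1 := by omega
          refine Or.inl (Or.inr ⟨k - m, fun hmem => hx ?_, hxk⟩)
          rw [← hxk]
          exact H.add_mem hnH hmem
    have h₀ := Set.ncard_le_ncard hcover
      (((hfin.image _).union (hfin.image _)).union (hfin₃.image _))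
    have h₁ := Set.ncard_union_le ((fun k => 2 * k) '' (d2 H : Set ℕ)ᶜ ∪
        (fun k => n + 2 * k) '' (d2 H : Set ℕ)ᶜ)
        ((fun i => 2 * i + 1) '' Set.Iio ((n - 1) / 2))
    have h₂ := Set.ncard_union_le ((fun k => 2 * k) '' (d2 H : Set ℕ)ᶜ)
        ((fun k => n + 2 * k) '' (d2 H : Set ℕ)ᶜ)
    have h₃ := Set.ncard_image_le (f := fun k => 2 * k) hfin
    have h₄ := Set.ncard_image_le (f := fun k => n + 2 * k) hfin
    have h₅ := Set.ncard_image_le (f := fun i => 2 * i + 1) hfin₃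
    have h₆ : (Set.Iio ((n - 1) / 2)).ncard = (n - 1) / 2 := by
      rw [← Finset.coe_Iio, Set.ncard_coe_finset, Nat.card_Iio]
    unfold genus
    omega
  exact ⟨hle, Nat.le.dest hle⟩
end

section
/- Let H̃ be a numerical semigroup of genus g̃ with d₂(H̃) = ⟨2,3⟩. Then H̃ is one of the following: ⟨3,4,5⟩, or ⟨3,4⟩, or ⟨4,5,6,7⟩, or ⟨4,6,2g̃−3⟩ with g̃ ≥ 4, or ⟨4,6,2g̃−1,2g̃+1⟩ with g̃ ≥ 4. -/
/-- A submonoid of `ℕ` containing `4` and `6` contains every even number except possibly `2`. -/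
lemma two_mul_mem_of_four_six (K : AddSubmonoid ℕ) (h4 : 4 ∈ K) (h6 : 6 ∈ K) (k : ℕ)
    (hk : k ≠ 1) : 2 * k ∈ K := by
  induction k using Nat.strong_induction_on with
  | _ k ih =>
    rcases Nat.lt_or_ge k 4 with hlt | hge
    · interval_cases k
      · simp
      · omega
      · exact h4
      · exact h6
    · have h := K.add_mem (ih (k - 2) (by omega) (by omega)) h4
      rwa [show 2 * (k - 2) + 4 = 2 * k by omega] at h

lemma mem_closure_two_three_iff (k : ℕ) :
    k ∈ AddSubmonoid.closure ({2, 3} : Set ℕ) ↔ k ≠ 1 := by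
  constructor
  · intro h
    induction h using AddSubmonoid.closure_induction with
    | mem x hx => rcases hx with rfl | rfl <;> norm_num
    | zero => norm_num
    | add x y hx hy ihx ihy => omega
  · intro hk
    have h2 : 2 ∈ AddSubmonoid.closure ({2, 3} : Set ℕ) :=
      AddSubmonoid.subset_closure (by simp)
    have h3 : 3 ∈ AddSubmonoid.closure ({2, 3} : Set ℕ) :=
      AddSubmonoid.subset_closure (by simp)
    rcases Nat.even_or_odd' k with ⟨c, rfl | rfl⟩
    · simpa [mul_comm] using AddSubmonoid.nsmul_mem _ h2 c
    · have h := AddSubmonoid.add_mem _ (AddSubmonoid.nsmul_mem _ h2 (c - 1)) h3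
      rwa [smul_eq_mul, show (c - 1) * 2 + 3 = 2 * c + 1 by omega] at h

/-- Here `2 * m + 1` is the least odd element of `H`. Any `K` containing `4`, `6`, `2 * m + 1`,
and also `2 * m + 3` when `H` does, contains `H`. -/
lemma le_of_generators_mem (H K : AddSubmonoid ℕ) (m : ℕ) (h2 : 2 ∉ H)
    (hmin : ∀ k < m, 2 * k + 1 ∉ H) (h4 : 4 ∈ K) (h6 : 6 ∈ K) (hm : 2 * m + 1 ∈ K)
    (hm2 : 2 * m + 3 ∈ H → 2 * m + 3 ∈ K) : H ≤ K := by
  intro x hx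
  rcases Nat.even_or_odd' x with ⟨c, rfl | rfl⟩
  · apply two_mul_mem_of_four_six K h4 h6
    rintro rfl
    exact h2 hx
  · have hc : m ≤ c := by
      by_contra! h
      exact hmin c h hx
    by_cases hcm : c = m + 1
    · subst hcm
      exact hm2 hx
    · have h := K.add_mem hm (two_mul_mem_of_four_six K h4 h6 (c - m) (by omega))
      rwa [show 2 * m + 1 + 2 * (c - m) = 2 * c + 1 by omega] at h

/-- The gap `2` together with the `m` odd numbers below `2 * m + 1`. -/
def gapFinset (m : ℕ) : Finset ℕ :=
  insert 2 ((Finset.range m).image fun i => 2 * i + 1)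

lemma card_gapFinset (m : ℕ) : (gapFinset m).card = m + 1 := by
  rw [gapFinset, Finset.card_insert_of_notMem, Finset.card_image_of_injective, Finset.card_range]
  · intro a b h
    simpa using h
  · simp only [Finset.mem_image, not_exists, not_and]
    intro a _
    omega

lemma mem_gapFinset (m x : ℕ) : x ∈ gapFinset m ↔ x = 2 ∨ ∃ i < m, 2 * i + 1 = x := by
  simp [gapFinset]

/-- Membership in a semigroup whose even elements are all even numbers except `2` and whose least
odd element is `2 * m + 1`. -/
lemma notMem_iff (H : AddSubmonoid ℕ) (m : ℕ) (h2 : 2 ∉ H) (h4 : 4 ∈ H) (h6 : 6 ∈ H)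
    (hm : 2 * m + 1 ∈ H) (hmin : ∀ k < m, 2 * k + 1 ∉ H) (x : ℕ) :
    x ∉ H ↔ x ∈ gapFinset m ∨ (x = 2 * m + 3 ∧ 2 * m + 3 ∉ H) := by
  rw [mem_gapFinset]
  constructor
  · intro hx
    by_contra! hcon
    obtain ⟨⟨hx2, hodd⟩, hx3⟩ := hcon
    rcases Nat.even_or_odd' x with ⟨c, rfl | rfl⟩
    · exact hx (two_mul_mem_of_four_six H h4 h6 c (by omega))
    · have hc : m ≤ c := by
        by_contra! h
        exact hodd c h rfl
      by_cases hcm : c = m + 1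
      · subst hcm
        exact hx (hx3 rfl)
      · have h := H.add_mem hm (two_mul_mem_of_four_six H h4 h6 (c - m) (by omega))
        rw [show 2 * m + 1 + 2 * (c - m) = 2 * c + 1 by omega] at h
        exact hx h
  · rintro ((rfl | ⟨i, hi, rfl⟩) | ⟨rfl, h⟩)
    · exact h2
    · exact hmin i hi
    · exact h

lemma genus_of_mem (H : AddSubmonoid ℕ) (m : ℕ) (h2 : 2 ∉ H) (h4 : 4 ∈ H) (h6 : 6 ∈ H)
    (hm : 2 * m + 1 ∈ H) (hmin : ∀ k < m, 2 * k + 1 ∉ H) (hm2 : 2 * m + 3 ∈ H) :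
    genus H = m + 1 := by
  have h : ((H : Set ℕ)ᶜ) = (gapFinset m : Set ℕ) := by
    ext x
    simpa [hm2] using notMem_iff H m h2 h4 h6 hm hmin x
  rw [genus, h, Set.ncard_coe_finset, card_gapFinset]

lemma genus_of_notMem (H : AddSubmonoid ℕ) (m : ℕ) (h2 : 2 ∉ H) (h4 : 4 ∈ H) (h6 : 6 ∈ H)
    (hm : 2 * m + 1 ∈ H) (hmin : ∀ k < m, 2 * k + 1 ∉ H) (hm2 : 2 * m + 3 ∉ H) :
    genus H = m + 2 := by
  have h : ((H : Set ℕ)ᶜ) = (insert (2 * m + 3) (gapFinset m) : Finset ℕ) := by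
    ext x
    simpa [hm2, or_comm] using notMem_iff H m h2 h4 h6 hm hmin x
  rw [genus, h, Set.ncard_coe_finset, Finset.card_insert_of_notMem, card_gapFinset]
  rw [mem_gapFinset]
  rintro (h | ⟨i, hi, h⟩) <;> omega

/-- Let `H̃` be a numerical semigroup of genus `g̃` with `d₂(H̃) = ⟨2,3⟩`. Then `H̃` is
`⟨3,4,5⟩`, or `⟨3,4⟩`, or `⟨4,5,6,7⟩`, or `⟨4,6,2g̃-3⟩` with `g̃ ≥ 4`, or
`⟨4,6,2g̃-1,2g̃+1⟩` with `g̃ ≥ 4`. -/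
theorem classification_d2_eq_closure_two_three (H : AddSubmonoid ℕ)
    (hH : ((H : Set ℕ)ᶜ).Finite)
    (hd : d2 H = AddSubmonoid.closure {2, 3}) :
    H = AddSubmonoid.closure {3, 4, 5} ∨
      H = AddSubmonoid.closure {3, 4} ∨
      H = AddSubmonoid.closure {4, 5, 6, 7} ∨
      (4 ≤ genus H ∧ H = AddSubmonoid.closure {4, 6, 2 * genus H - 3}) ∨
      (4 ≤ genus H ∧
        H = AddSubmonoid.closure {4, 6, 2 * genus H - 1, 2 * genus H + 1}) := by
  classical
  have heven : ∀ k, 2 * k ∈ H ↔ k ≠ 1 := by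
    intro k
    rw [← mem_closure_two_three_iff, ← hd]
    rfl
  have h2 : 2 ∉ H := fun h => (heven 1).1 h rfl
  have h4 : 4 ∈ H := (heven 2).2 (by norm_num)
  have h6 : 6 ∈ H := (heven 3).2 (by norm_num)
  -- Only finitely many odd numbers are missing, so `H` has an odd element.
  have hodd : ∃ k, 2 * k + 1 ∈ H := by
    by_contra! h
    exact Set.infinite_of_injective_forall_mem (f := fun k : ℕ => 2 * k + 1)
      (fun a b hab => by simpa using hab) h hH
  obtain ⟨m, hm, hmin⟩ : ∃ m, 2 * m + 1 ∈ H ∧ ∀ k < m, 2 * k + 1 ∉ H :=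
    ⟨Nat.find hodd, Nat.find_spec hodd, fun k hk => Nat.find_min hodd hk⟩
  have hm0 : m ≠ 0 := by
    rintro rfl
    exact h2 (H.add_mem hm hm)
  -- `H = closure S` once `S ⊆ H` and the closure contains the distinguished elements of `H`.
  have key : ∀ S : Set ℕ, S ⊆ H → 4 ∈ AddSubmonoid.closure S → 6 ∈ AddSubmonoid.closure S →
      2 * m + 1 ∈ AddSubmonoid.closure S →
      (2 * m + 3 ∈ H → 2 * m + 3 ∈ AddSubmonoid.closure S) → H = AddSubmonoid.closure S :=
    fun S hS k4 k6 km km2 => le_antisymm (le_of_generators_mem H _ m h2 hmin k4 k6 km km2)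
      (AddSubmonoid.closure_le.2 hS)
  have gen : ∀ {S : Set ℕ} {x : ℕ}, x ∈ S → x ∈ AddSubmonoid.closure S :=
    fun h => AddSubmonoid.subset_closure h
  -- When `3` is a generator, `6 = 3 + 3` is redundant.
  have six : ∀ {S : Set ℕ}, 3 ∈ S → 6 ∈ AddSubmonoid.closure S :=
    fun h => AddSubmonoid.add_mem _ (gen h) (gen h)
  by_cases hm2 : 2 * m + 3 ∈ H
  · have hg := genus_of_mem H m h2 h4 h6 hm hmin hm2
    by_cases h1 : m = 1
    · subst h1
      refine Or.inl (key _ ?_ (gen (by simp)) (six (by simp)) (gen (by simp))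
        fun _ => gen (by simp))
      rintro x (rfl | rfl | rfl) <;> assumption
    by_cases h1 : m = 2
    · subst h1
      refine Or.inr (Or.inr (Or.inl (key _ ?_ (gen (by simp)) (gen (by simp)) (gen (by simp))
        fun _ => gen (by simp))))
      rintro x (rfl | rfl | rfl | rfl) <;> assumption
    · refine Or.inr (Or.inr (Or.inr (Or.inr ⟨by omega, ?_⟩)))
      rw [hg, show 2 * (m + 1) - 1 = 2 * m + 1 by omega,
        show 2 * (m + 1) + 1 = 2 * m + 3 by omega]
      refine key _ ?_ (gen (by simp)) (gen (by simp)) (gen (by simp)) fun _ => gen (by simp)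
      rintro x (rfl | rfl | rfl | rfl) <;> assumption
  · have hg := genus_of_notMem H m h2 h4 h6 hm hmin hm2
    by_cases h1 : m = 1
    · subst h1
      refine Or.inr (Or.inl (key _ ?_ (gen (by simp)) (six (by simp)) (gen (by simp))
        fun h => absurd h hm2))
      rintro x (rfl | rfl) <;> assumption
    · refine Or.inr (Or.inr (Or.inr (Or.inl ⟨by omega, ?_⟩)))
      rw [hg, show 2 * (m + 2) - 3 = 2 * m + 1 by omega]
      refine key _ ?_ (gen (by simp)) (gen (by simp)) (gen (by simp)) fun h => absurd h hm2
      rintro x (rfl | rfl | rfl) <;> assumption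
end
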